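/- Let f, g ∈ L_r(F) and Φ ∈ E_F^R. Then for all h₁, h₂ ∈ Hom(F): |L_{f,g}(h₁) ∘ (L_{f,g}(h₂))⁻¹|_{Φ,r} ≤ λ_r(f) · sup_{u ∈ F}(Φ(u)/Φ(f(u))) · |h₁ ∘ h₂⁻¹|_{Φ,r}, and |(L_{f,g}(h₁))⁻¹ ∘ L_{f,g}(h₂)|_{Φ,r} ≤ λ_r(g) · sup_{u ∈ F}(Φ(u)/Φ(g(u))) · |h₁⁻¹ ∘ h₂|_{Φ,r}. -/

import Mathlib

open Filter Topology
open scoped ENNReal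

noncomputable section

/-- `|f|_{Φ,r} = sup_{x ∈ F} r(‖f(x) − x‖)/Φ(x) ∈ [0,∞]`. -/
def phiNorm {E : Type*} [NormedAddCommGroup E] (F : Set E) (Φ : F → ℝ) (r : ℝ → ℝ)
    (f : F → F) : ℝ≥0∞ :=
  ⨆ x : F, ENNReal.ofReal (r ‖(f x : E) - (x : E)‖ / Φ x)

/-- The premetric `ρ_{Φ,r}(f,g) = max(|f∘g⁻¹|_{Φ,r}, |f⁻¹∘g|_{Φ,r})`. -/
def phiDist {E : Type*} [NormedAddCommGroup E] (F : Set E) (Φ : F → ℝ) (r : ℝ → ℝ)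
    (f g : F ≃ₜ F) : ℝ≥0∞ :=
  max (phiNorm F Φ r fun x => f (g.symm x)) (phiNorm F Φ r fun x => f.symm (g x))

/-- `H_{Φ,r} = {f ∈ Hom(F) : |f|_{Φ,r} < ∞ and |f⁻¹|_{Φ,r} < ∞}`. -/
def Hgroup {E : Type*} [NormedAddCommGroup E] (F : Set E) (Φ : F → ℝ) (r : ℝ → ℝ) :
    Set (F ≃ₜ F) :=
  {f | phiNorm F Φ r ⇑f < ⊤ ∧ phiNorm F Φ r ⇑f.symm < ⊤}

/-- A growth function `R : [0,∞) → (0,∞)`: continuous and subadditive. -/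
structure GrowthFun (R : ℝ → ℝ) : Prop where
  pos : ∀ u, 0 ≤ u → 0 < R u
  cont : ContinuousOn R (Set.Ici 0)
  subadd : ∀ u v, 0 ≤ u → 0 ≤ v → R (u + v) ≤ R u + R v

/-- `Φ ∈ E_F^R`, with constants `m` (condition (G1)) and `β > γ > 0` (condition (G3));
condition (G2) is the coercivity. -/
structure MemE {E : Type*} [NormedAddCommGroup E] (F : Set E) (R : ℝ → ℝ) (Φ : F → ℝ)
    (m β γ : ℝ) : Prop where
  cont : Continuous Φ
  nonneg : ∀ x : F, 0 ≤ Φ x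
  m_pos : 0 < m
  m_le : ∀ x : F, m ≤ Φ x
  coercive : ∀ C : ℝ, ∃ M : ℝ, ∀ x : F, M ≤ ‖(x : E)‖ → C ≤ Φ x
  gamma_pos : 0 < γ
  gamma_lt_beta : γ < β
  lower : ∀ x : F, γ * R ‖(x : E)‖ ≤ Φ x
  upper : ∀ x : F, Φ x ≤ β * R ‖(x : E)‖

/-- The standing assumptions on `r : [0,∞) → [0,∞)`: `r(x) = 0` iff `x = 0`, continuity
at `0`, nondecreasing, subadditive. -/
structure StandingR (r : ℝ → ℝ) : Prop where
  nonneg : ∀ u, 0 ≤ u → 0 ≤ r u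
  zero_iff : ∀ u, 0 ≤ u → (r u = 0 ↔ u = 0)
  cont_at_zero : ContinuousWithinAt r (Set.Ici 0) 0
  mono : MonotoneOn r (Set.Ici 0)
  subadd : ∀ u v, 0 ≤ u → 0 ≤ v → r (u + v) ≤ r u + r v

/-- Condition `(A_r)`: lower semicontinuity of `r` for the simple convergence on `F`. -/
def Ar {E : Type*} [NormedAddCommGroup E] (F : Set E) (r : ℝ → ℝ) : Prop :=
  ∀ (g : ℕ → F → F) (x : F),
    r (Filter.liminf (fun n => ‖(g n x : E)‖) Filter.atTop) ≤
      Filter.liminf (fun n => r ‖(g n x : E)‖) Filter.atTop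

/-- The ball `B⁻(f,α) = {g ∈ H_{Φ,r} : ρ_{Φ,r}(f,g) < α}`. -/
def BallMinus {E : Type*} [NormedAddCommGroup E] (F : Set E) (Φ : F → ℝ) (r : ℝ → ℝ)
    (f : F ≃ₜ F) (α : ℝ) : Set (F ≃ₜ F) :=
  {g | g ∈ Hgroup F Φ r ∧ phiDist F Φ r f g < ENNReal.ofReal α}

/-- The ball `B⁺(f,α) = {g ∈ H_{Φ,r} : ρ_{Φ,r}(g,f) < α}`. -/
def BallPlus {E : Type*} [NormedAddCommGroup E] (F : Set E) (Φ : F → ℝ) (r : ℝ → ℝ)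
    (f : F ≃ₜ F) (α : ℝ) : Set (F ≃ₜ F) :=
  {g | g ∈ Hgroup F Φ r ∧ phiDist F Φ r g f < ENNReal.ofReal α}

/-- The family `T⁻(ρ_{Φ,r})`. -/
def Tminus {E : Type*} [NormedAddCommGroup E] (F : Set E) (Φ : F → ℝ) (r : ℝ → ℝ) :
    Set (Set (F ≃ₜ F)) :=
  {H | H ⊆ Hgroup F Φ r ∧ ∀ f ∈ H, ∃ α : ℝ, 0 < α ∧ BallMinus F Φ r f α ⊆ H}

/-- The family `T⁺(ρ_{Φ,r})`. -/
def Tplus {E : Type*} [NormedAddCommGroup E] (F : Set E) (Φ : F → ℝ) (r : ℝ → ℝ) :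
    Set (Set (F ≃ₜ F)) :=
  {H | H ⊆ Hgroup F Φ r ∧ ∀ f ∈ H, ∃ α : ℝ, 0 < α ∧ BallPlus F Φ r f α ⊆ H}

/-- The `r`-Lipschitz constant `λ_r(f) ∈ [0,∞]`. -/
def lambdaR {E : Type*} [NormedAddCommGroup E] (F : Set E) (r : ℝ → ℝ) (f : F → F) : ℝ≥0∞ :=
  ⨆ (x : F) (y : F) (_ : x ≠ y),
    ENNReal.ofReal (r ‖(f x : E) - (f y : E)‖ / r ‖(x : E) - (y : E)‖)

/-- `L_r(F)`, the set of `r`-Lipeomorphisms of `F`. -/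
def LipGroup {E : Type*} [NormedAddCommGroup E] (F : Set E) (r : ℝ → ℝ) : Set (F ≃ₜ F) :=
  {f | lambdaR F r ⇑f < ⊤ ∧ lambdaR F r ⇑f.symm < ⊤}

/-- The conjugacy operator `L_{f,g}(h) = f ∘ h ∘ g⁻¹`. -/
def conjOp {E : Type*} [NormedAddCommGroup E] (F : Set E) (f g : F ≃ₜ F) :
    (F ≃ₜ F) → (F ≃ₜ F) :=
  fun h => (g.symm.trans h).trans f
theorem phiNorm_conj_le {E : Type*} [NormedAddCommGroup E] (F : Set E) (Φ : F → ℝ)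
    (hΦ : ∀ x, 0 < Φ x) (r : ℝ → ℝ) (hr : StandingR r) (f : F ≃ₜ F) (k : F → F) :
    phiNorm F Φ r (fun x => f (k (f.symm x))) ≤
      lambdaR F r ⇑f * (⨆ u : F, ENNReal.ofReal (Φ u / Φ (f u))) * phiNorm F Φ r k := by
  unfold phiNorm
  refine iSup_le fun x => ?_
  obtain ⟨u, rfl⟩ := f.surjective x
  simp only [Homeomorph.symm_apply_apply]
  by_cases hk : k u = u
  · have h0 : r 0 = 0 := (hr.zero_iff 0 le_rfl).2 rfl
    simp [hk, h0]
  · have hne : ‖(k u : E) - (u : E)‖ ≠ 0 := by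
      rw [norm_ne_zero_iff, sub_ne_zero]
      exact fun h => hk (Subtype.ext h)
    have hrne : r ‖(k u : E) - (u : E)‖ ≠ 0 :=
      fun h => hne ((hr.zero_iff _ (norm_nonneg _)).1 h)
    have h1 : 0 ≤ r ‖(f (k u) : E) - (f u : E)‖ := hr.nonneg _ (norm_nonneg _)
    have h2 : 0 ≤ r ‖(k u : E) - (u : E)‖ := hr.nonneg _ (norm_nonneg _)
    have hu := hΦ u
    have hfu := hΦ (f u)
    have key : r ‖(f (k u) : E) - (f u : E)‖ / Φ (f u) =
        r ‖(f (k u) : E) - (f u : E)‖ / r ‖(k u : E) - (u : E)‖ * (Φ u / Φ (f u)) *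
          (r ‖(k u : E) - (u : E)‖ / Φ u) := by
      field_simp
    rw [key, ENNReal.ofReal_mul (by positivity), ENNReal.ofReal_mul (by positivity)]
    gcongr
    · unfold lambdaR
      exact le_iSup_of_le (k u) (le_iSup_of_le u (le_iSup_of_le hk le_rfl))
    · exact le_iSup (fun u : F => ENNReal.ofReal (Φ u / Φ (f u))) u
    · exact le_iSup (fun x : F => ENNReal.ofReal (r ‖(k x : E) - (x : E)‖ / Φ x)) u

/-- The two basic estimates for the conjugacy operator:
`|L_{f,g}(h₁) ∘ (L_{f,g}(h₂))⁻¹|_{Φ,r} ≤ λ_r(f) · sup_u Φ(u)/Φ(f(u)) · |h₁∘h₂⁻¹|_{Φ,r}` and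
`|(L_{f,g}(h₁))⁻¹ ∘ L_{f,g}(h₂)|_{Φ,r} ≤ λ_r(g) · sup_u Φ(u)/Φ(g(u)) · |h₁⁻¹∘h₂|_{Φ,r}`. -/
theorem statement13 {E : Type*} [NormedAddCommGroup E] [NormedSpace ℝ E] [FiniteDimensional ℝ E]
    (F : Set E) (hFnc : ¬ IsCompact F)
    (R : ℝ → ℝ) (hR : GrowthFun R)
    (Φ : F → ℝ) (m β γ : ℝ) (hΦ : MemE F R Φ m β γ)
    (r : ℝ → ℝ) (hr : StandingR r)
    (f g : F ≃ₜ F) (hf : f ∈ LipGroup F r) (hg : g ∈ LipGroup F r) :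
    ∀ h₁ h₂ : F ≃ₜ F,
      phiNorm F Φ r (fun x => (conjOp F f g h₁) ((conjOp F f g h₂).symm x)) ≤
        lambdaR F r ⇑f * (⨆ u : F, ENNReal.ofReal (Φ u / Φ (f u))) *
          phiNorm F Φ r (fun x => h₁ (h₂.symm x)) ∧
      phiNorm F Φ r (fun x => (conjOp F f g h₁).symm ((conjOp F f g h₂) x)) ≤
        lambdaR F r ⇑g * (⨆ u : F, ENNReal.ofReal (Φ u / Φ (g u))) *
          phiNorm F Φ r (fun x => h₁.symm (h₂ x)) := by
  intro h₁ h₂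
  have hp : ∀ x, 0 < Φ x := fun x => hΦ.m_pos.trans_le (hΦ.m_le x)
  constructor
  · have h := phiNorm_conj_le F Φ hp r hr f (fun x => h₁ (h₂.symm x))
    have e : (fun x => (conjOp F f g h₁) ((conjOp F f g h₂).symm x)) =
        fun x => f (h₁ (h₂.symm (f.symm x))) := by
      funext x
      simp [conjOp]
    rw [e]
    exact h
  · have h := phiNorm_conj_le F Φ hp r hr g (fun x => h₁.symm (h₂ x))
    have e : (fun x => (conjOp F f g h₁).symm ((conjOp F f g h₂) x)) =
        fun x => g (h₁.symm (h₂ (g.symm x))) := by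
      funext x
      simp [conjOp]
    rw [e]
    exact h
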